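/- arXiv:2103.12611 — 2 statements merged into one kernel-verified Lean document; each statement's English description precedes it below -/
import Mathlib

section
/- In the regular ℤ/N-colored setup with generic parameters, for every color ω ∈ ℤ/N and every function k̄: ℤ/N → ℤ_{≥0}, the rational function Σ_{λ̄ : k_•(λ̄) = k̄} μ̂^{orb}(λ̄)·Y_{ω+1}(x+ε̃)|_{λ̄} + Σ_{λ̄ : k_•(λ̄) = k̄−δ_ω} μ̂^{orb}(λ̄)·P_ω(x)/Y_ω(x)|_{λ̄} is a polynomial in x (where k̄−δ_ω lowers the value of k̄ at ω by one, and the second sum is empty if k̄(ω)=0). Equivalently, the average of the fractional qq-character 𝒳_ω(x) = Y_{ω+1}(x+ε̃) + 𝔮_ω·P_ω(x)/Y_ω(x) against the orbifold pseudo-measure is, coefficientwise in the fractional couplings 𝔮₀,…,𝔮_{N−1}, a regular function of x. -/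
open scoped BigOperators

noncomputable section

/-- The content `c̃(i, j) = (i−1)ε₁ + (j−1)ε̃₂` of a box, in 0-based coordinates. -/
def ctil (ε₁ ε₂t : ℂ) (c : ℕ × ℕ) : ℂ := (c.1 : ℂ) * ε₁ + (c.2 : ℂ) * ε₂t

/-- The instanton charge `k_ω(λ̄)`: the number of boxes of `λ̄` of color `ω`,
where a (0-based) box `(i, j)` of `λ^{(ω′)}` has color `ω′ + j`. -/
def kcharge (N : ℕ) [NeZero N] (lam : ZMod N → YoungDiagram) (ω : ZMod N) : ℕ :=
  ∑ ω' : ZMod N, ((lam ω').cells.filter fun c => ω' + (c.2 : ZMod N) = ω).card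

/-- The colored Y-observable `Y_ω(x + s)|_λ̄ ∈ ℂ(x)` (the variable is shifted by `s`). -/
def Ycol (N : ℕ) [NeZero N] (ε₁ ε₂t : ℂ) (aT : ZMod N → ℂ) (ω : ZMod N) (s : ℂ)
    (lam : ZMod N → YoungDiagram) : RatFunc ℂ :=
  (RatFunc.X + RatFunc.C s - RatFunc.C (aT ω)) *
    ∏ ω' : ZMod N, ∏ c ∈ (lam ω').cells,
      ((if ω' + (c.2 : ZMod N) = ω then
          (RatFunc.X + RatFunc.C s - RatFunc.C (aT ω' + ctil ε₁ ε₂t c + ε₁)) /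
            (RatFunc.X + RatFunc.C s - RatFunc.C (aT ω' + ctil ε₁ ε₂t c))
        else 1) *
       (if ω' + (c.2 : ZMod N) = ω - 1 then
          (RatFunc.X + RatFunc.C s - RatFunc.C (aT ω' + ctil ε₁ ε₂t c + ε₂t)) /
            (RatFunc.X + RatFunc.C s - RatFunc.C (aT ω' + ctil ε₁ ε₂t c + ε₁ + ε₂t))
        else 1))

/-- The basis element `e^{(w, σ)}` of the group algebra `ℤ[ℂ × ℤ/N]`. -/
def e2 (N : ℕ) (w : ℂ × ZMod N) : AddMonoidAlgebra ℤ (ℂ × ZMod N) :=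
  AddMonoidAlgebra.single w 1

/-- `χ̃_λ = Σ_{(i,j)∈λ} e^{(c̃(i,j), j−1)}` (0-based boxes). -/
def chiT (N : ℕ) (ε₁ ε₂t : ℂ) (μ : YoungDiagram) : AddMonoidAlgebra ℤ (ℂ × ZMod N) :=
  ∑ c ∈ μ.cells, e2 N (ctil ε₁ ε₂t c, (c.2 : ZMod N))

/-- `χ̃*_λ = Σ_{(i,j)∈λ} e^{(−c̃(i,j), 1−j)}` (0-based boxes). -/
def chiTstar (N : ℕ) (ε₁ ε₂t : ℂ) (μ : YoungDiagram) : AddMonoidAlgebra ℤ (ℂ × ZMod N) :=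
  ∑ c ∈ μ.cells, e2 N (-(ctil ε₁ ε₂t c), -(c.2 : ZMod N))

/-- The colored tangent character of `λ̄` in the group algebra of `ℂ × ℤ/N`. -/
def colChar (N : ℕ) [NeZero N] (ε₁ ε₂t : ℂ) (aT : ZMod N → ℂ)
    (lam : ZMod N → YoungDiagram) : AddMonoidAlgebra ℤ (ℂ × ZMod N) :=
  ∑ ω' : ZMod N, ∑ ω'' : ZMod N,
    e2 N (aT ω' - aT ω'', ω' - ω'') *
      (chiTstar N ε₁ ε₂t (lam ω'') + e2 N (ε₁ + ε₂t, 1) * chiT N ε₁ ε₂t (lam ω') -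
        (1 - e2 N (ε₁, 0)) * (1 - e2 N (ε₂t, 1)) *
          chiT N ε₁ ε₂t (lam ω') * chiTstar N ε₁ ε₂t (lam ω''))

/-- The orbifold pseudo-measure weight `μ̂^{orb}(λ̄)`, where `T λ̄` is the multiset of
colored tangent weights and the denominator is the product of the weights of color `0`. -/
def muOrb (N : ℕ) [NeZero N] (ε₁ ε₂t : ℂ) (aT mp mm : ZMod N → ℂ)
    (T : (ZMod N → YoungDiagram) → Multiset (ℂ × ZMod N))
    (lam : ZMod N → YoungDiagram) : ℂ :=
  (∏ ω' : ZMod N, ∏ c ∈ (lam ω').cells,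
      ((aT ω' + ctil ε₁ ε₂t c - mp (ω' + (c.2 : ZMod N))) *
        (mm (ω' + (c.2 : ZMod N)) - aT ω' - ctil ε₁ ε₂t c))) /
    (((T lam).filter fun p => p.2 = 0).map Prod.fst).prod

/-!
For generic parameters the poles of `Y_{ω+1}(x + ε̃)` at `λ̄` are simple and located at the contents
of the removable boxes of color `ω`, and those of `P_ω(x) / Y_ω(x)` are simple and located at the
contents of the addable boxes of color `ω`. Adding a box `b` of color `ω` therefore matches the
poles of the first sum with those of the second, and it remains to see that matched residues cancel.
When `b` is added, the tangent weights change by the differences between the weight of `b` and the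
zeros and poles of the two observables, so the ratio of the two measures is minus the inverse ratio
of the residues. What is left of each summand after removing its polar part is a polynomial.
-/

section YoungDiagram

/-- The cells that can be added to `μ`: the minimal cells outside `μ`. -/
def addableCells (μ : YoungDiagram) : Finset (ℕ × ℕ) :=
  (WellQuasiOrderedLE.finite_of_isAntichain
    (setOfPred_minimal_antichain fun c : ℕ × ℕ => c ∉ μ)).toFinset

open Classical in
/-- The cells that can be removed from `μ`: the maximal cells of `μ`. -/
def removableCells (μ : YoungDiagram) : Finset (ℕ × ℕ) :=
  {c ∈ μ.cells | Maximal (· ∈ μ) c}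

variable {μ : YoungDiagram} {c : ℕ × ℕ}

theorem mem_addableCells : c ∈ addableCells μ ↔ Minimal (· ∉ μ) c := by
  simp [addableCells]

theorem mem_removableCells : c ∈ removableCells μ ↔ Maximal (· ∈ μ) c := by
  simpa [removableCells] using fun h : Maximal (· ∈ μ) c => h.prop

theorem mk_mem_addableCells_iff {i j : ℕ} :
    (i, j) ∈ addableCells μ ↔
      (i, j) ∉ μ ∧ (∀ k, i = k + 1 → (k, j) ∈ μ) ∧ ∀ l, j = l + 1 → (i, l) ∈ μ := by
  rw [mem_addableCells, minimal_iff_forall_lt]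
  refine and_congr_right fun _ => ⟨fun h => ⟨?_, ?_⟩, ?_⟩
  · rintro k rfl
    exact not_not.1 (h (Prod.mk_lt_mk_iff_left.2 k.lt_succ_self))
  · rintro l rfl
    exact not_not.1 (h (Prod.mk_lt_mk_iff_right.2 l.lt_succ_self))
  · rintro ⟨hrow, hcol⟩ ⟨k, l⟩ hlt
    rw [not_not]
    obtain ⟨hk, hl⟩ | ⟨hk, hl⟩ := Prod.mk_lt_mk.1 hlt
    · obtain ⟨m, rfl⟩ := Nat.exists_eq_add_one_of_ne_zero (Nat.ne_zero_of_lt hk)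
      exact μ.isLowerSet (Prod.mk_le_mk.2 ⟨Nat.lt_succ_iff.1 hk, hl⟩) (hrow m rfl)
    · obtain ⟨m, rfl⟩ := Nat.exists_eq_add_one_of_ne_zero (Nat.ne_zero_of_lt hl)
      exact μ.isLowerSet (Prod.mk_le_mk.2 ⟨hk, Nat.lt_succ_iff.1 hl⟩) (hcol m rfl)

theorem mk_mem_removableCells_iff {i j : ℕ} :
    (i, j) ∈ removableCells μ ↔ (i, j) ∈ μ ∧ (i + 1, j) ∉ μ ∧ (i, j + 1) ∉ μ := by
  rw [mem_removableCells, maximal_iff_forall_gt]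
  refine and_congr_right fun _ => ⟨fun h => ⟨?_, ?_⟩, ?_⟩
  · exact h (Prod.mk_lt_mk_iff_left.2 i.lt_succ_self)
  · exact h (Prod.mk_lt_mk_iff_right.2 j.lt_succ_self)
  · rintro ⟨hrow, hcol⟩ ⟨k, l⟩ hlt hkl
    obtain ⟨hk, hl⟩ | ⟨hk, hl⟩ := Prod.mk_lt_mk.1 hlt
    · exact hrow (μ.isLowerSet (Prod.mk_le_mk.2 ⟨hk, hl⟩) hkl)
    · exact hcol (μ.isLowerSet (Prod.mk_le_mk.2 ⟨hk, hl⟩) hkl)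

/-- The diagram `μ` with an addable cell adjoined. -/
def insertCell (μ : YoungDiagram) (c : ℕ × ℕ) (hc : c ∈ addableCells μ) : YoungDiagram where
  cells := insert c μ.cells
  isLowerSet := by
    intro e d hde he
    simp only [Finset.coe_insert, Set.mem_insert_iff, SetLike.mem_coe,
      YoungDiagram.mem_cells] at he ⊢
    by_contra! hd
    obtain rfl | he := he
    · exact hd.1 ((mem_addableCells.1 hc).eq_of_le hd.2 hde)
    · exact hd.2 (μ.isLowerSet hde he)

/-- The diagram `μ` with a removable cell deleted. -/
def eraseCell (μ : YoungDiagram) (c : ℕ × ℕ) (hc : c ∈ removableCells μ) : YoungDiagram where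
  cells := μ.cells.erase c
  isLowerSet := by
    intro e d hde he
    simp only [Finset.coe_erase, Set.mem_sdiff, Set.mem_singleton_iff, SetLike.mem_coe,
      YoungDiagram.mem_cells] at he ⊢
    refine ⟨μ.isLowerSet hde he.1, ?_⟩
    rintro rfl
    exact he.2 ((mem_removableCells.1 hc).eq_of_ge he.1 hde)

theorem mem_removableCells_insertCell (hc : c ∈ addableCells μ) :
    c ∈ removableCells (insertCell μ c hc) := by
  refine mem_removableCells.2 ⟨Finset.mem_insert_self _ _, fun d hd hcd => ?_⟩
  obtain rfl | hd := Finset.mem_insert.1 hd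
  · exact le_rfl
  · exact absurd (μ.isLowerSet hcd hd) (mem_addableCells.1 hc).prop

theorem mem_addableCells_eraseCell (hc : c ∈ removableCells μ) :
    c ∈ addableCells (eraseCell μ c hc) := by
  refine mem_addableCells.2 ⟨Finset.notMem_erase _ _, fun d hd hdc => ?_⟩
  by_contra hcd
  have hdμ : d ∈ μ := μ.isLowerSet hdc (mem_removableCells.1 hc).prop
  exact hd (Finset.mem_erase.2 ⟨fun h => hcd h.ge, hdμ⟩)

theorem finite_setOf_card_le (n : ℕ) : {μ : YoungDiagram | μ.card ≤ n}.Finite := by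
  refine Set.Finite.of_finite_image (f := YoungDiagram.cells)
    ((Finset.finite_toSet (Finset.Iic (n, n)).powerset).subset ?_)
    fun μ _ ν _ h => YoungDiagram.ext h
  rintro _ ⟨μ, hμ, rfl⟩
  refine Finset.mem_coe.2 (Finset.mem_powerset.2 fun ⟨i, j⟩ hij => ?_)
  have hle : (i + 1) * (j + 1) ≤ n := by
    have hsub : Finset.Iic (i, j) ⊆ μ.cells := fun d hd =>
      μ.isLowerSet (Finset.mem_Iic.1 hd) hij
    simpa [← Finset.Iic_product_Iic] using (Finset.card_le_card hsub).trans hμ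
  rw [Finset.mem_Iic, Prod.mk_le_mk]
  constructor <;> nlinarith

theorem count_val_map {α β : Type*} [DecidableEq β] {f : α → β} (hf : Function.Injective f)
    (s : Finset α) (x : β) : (s.val.map f).count x = if ∃ a ∈ s, f a = x then 1 else 0 := by
  rw [Multiset.count_eq_of_nodup (s.nodup.map hf)]
  simp only [Multiset.mem_map, Finset.mem_val]

theorem corners_multiset (μ : YoungDiagram) :
    (0, 0) ::ₘ (μ.cells.val.map (Prod.map (· + 1) id) + μ.cells.val.map (Prod.map id (· + 1)) +
        (removableCells μ).val.map (Prod.map (· + 1) (· + 1))) =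
      μ.cells.val + μ.cells.val.map (Prod.map (· + 1) (· + 1)) + (addableCells μ).val := by
  classical
  have hsucc : Function.Injective (· + 1 : ℕ → ℕ) := Nat.succ_injective
  ext ⟨i, j⟩
  rw [← Multiset.singleton_add]
  simp only [Multiset.count_add, count_val_map (hsucc.prodMap Function.injective_id),
    count_val_map (Function.injective_id.prodMap hsucc), count_val_map (hsucc.prodMap hsucc),
    Multiset.count_eq_of_nodup (Finset.nodup _), Multiset.count_singleton, Finset.mem_val,
    YoungDiagram.mem_cells, Prod.exists, Prod.map_apply, Prod.mk.injEq,
    mk_mem_addableCells_iff, mk_mem_removableCells_iff, id_eq]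
  have hdown : ∀ k l, ((k + 1, l) ∈ μ → (k, l) ∈ μ) ∧ ((k, l + 1) ∈ μ → (k, l) ∈ μ) := fun k l =>
    ⟨μ.up_left_mem k.le_succ le_rfl, μ.up_left_mem le_rfl l.le_succ⟩
  rcases i with _ | i <;> rcases j with _ | j
  · by_cases h : (0, 0) ∈ μ <;> simp [h]
  · have := hdown 0 j
    by_cases h : (0, j) ∈ μ <;> by_cases h' : (0, j + 1) ∈ μ <;> simp_all
  · have := hdown i 0
    by_cases h : (i, 0) ∈ μ <;> by_cases h' : (i + 1, 0) ∈ μ <;> simp_all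
  · have := hdown i j
    have := hdown i (j + 1)
    have := hdown (i + 1) j
    by_cases h₀₀ : (i, j) ∈ μ <;> by_cases h₁₀ : (i + 1, j) ∈ μ <;>
      by_cases h₀₁ : (i, j + 1) ∈ μ <;> by_cases h₁₁ : (i + 1, j + 1) ∈ μ <;> simp_all

@[to_additive]
theorem prod_corners {M : Type*} [CommMonoid M] (μ : YoungDiagram) (g : ℕ × ℕ → M) :
    g (0, 0) * (∏ c ∈ μ.cells, g (c.1 + 1, c.2)) * (∏ c ∈ μ.cells, g (c.1, c.2 + 1)) *
        ∏ c ∈ removableCells μ, g (c.1 + 1, c.2 + 1) =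
      (∏ c ∈ μ.cells, g c) * (∏ c ∈ μ.cells, g (c.1 + 1, c.2 + 1)) *
        ∏ c ∈ addableCells μ, g c := by
  have h := congrArg (fun m => (m.map g).prod) (corners_multiset μ)
  simp only [Multiset.map_cons, Multiset.map_add, Multiset.map_map, Multiset.prod_cons,
    Multiset.prod_add, ← mul_assoc] at h
  exact h

end YoungDiagram

section Tuple

/-- A box of a tuple of Young diagrams indexed by `ι`: the index of a diagram and a cell. -/
abbrev Box (ι : Type*) := (_ : ι) × ℕ × ℕ

variable {ι : Type*} [Fintype ι]

/-- The boxes of a tuple of Young diagrams. -/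
def boxes (lam : ι → YoungDiagram) : Finset (Box ι) :=
  Finset.univ.sigma fun i => (lam i).cells

/-- The boxes that can be added to a tuple of Young diagrams. -/
def addableBoxes (lam : ι → YoungDiagram) : Finset (Box ι) :=
  Finset.univ.sigma fun i => addableCells (lam i)

/-- The boxes that can be removed from a tuple of Young diagrams. -/
def removableBoxes (lam : ι → YoungDiagram) : Finset (Box ι) :=
  Finset.univ.sigma fun i => removableCells (lam i)

variable {lam : ι → YoungDiagram} {b : Box ι}

theorem mem_boxes : b ∈ boxes lam ↔ b.2 ∈ lam b.1 := by
  simp [boxes]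

theorem mem_addableBoxes : b ∈ addableBoxes lam ↔ b.2 ∈ addableCells (lam b.1) := by
  simp [addableBoxes]

theorem mem_removableBoxes : b ∈ removableBoxes lam ↔ b.2 ∈ removableCells (lam b.1) := by
  simp [removableBoxes]

theorem notMem_boxes_of_mem_addableBoxes (hb : b ∈ addableBoxes lam) : b ∉ boxes lam :=
  fun h => (mem_addableCells.1 (mem_addableBoxes.1 hb)).prop (mem_boxes.1 h)

theorem removableBoxes_subset_boxes : removableBoxes lam ⊆ boxes lam := fun _ hb =>
  mem_boxes.2 (mem_removableCells.1 (mem_removableBoxes.1 hb)).prop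

theorem boxes_injective : Function.Injective (boxes : (ι → YoungDiagram) → Finset (Box ι)) := by
  refine fun lam lam' h => funext fun i => YoungDiagram.ext (Finset.ext fun c => ?_)
  simpa [mem_boxes] using Finset.ext_iff.1 h ⟨i, c⟩

variable [DecidableEq ι]

/-- The tuple `lam` with an addable box adjoined. -/
def addBox (lam : ι → YoungDiagram) (b : Box ι) (hb : b ∈ addableBoxes lam) :
    ι → YoungDiagram :=
  Function.update lam b.1 (insertCell (lam b.1) b.2 (mem_addableBoxes.1 hb))

/-- The tuple `lam` with a removable box deleted. -/
def removeBox (lam : ι → YoungDiagram) (b : Box ι) (hb : b ∈ removableBoxes lam) :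
    ι → YoungDiagram :=
  Function.update lam b.1 (eraseCell (lam b.1) b.2 (mem_removableBoxes.1 hb))

theorem boxes_addBox (hb : b ∈ addableBoxes lam) :
    boxes (addBox lam b hb) = insert b (boxes lam) := by
  obtain ⟨i, c⟩ := b
  ext ⟨j, d⟩
  rw [Finset.mem_insert, mem_boxes, mem_boxes, addBox]
  obtain rfl | hji := eq_or_ne j i
  · simp [insertCell, ← YoungDiagram.mem_cells]
  · simp [hji]

theorem boxes_removeBox (hb : b ∈ removableBoxes lam) :
    boxes (removeBox lam b hb) = (boxes lam).erase b := by
  obtain ⟨i, c⟩ := b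
  ext ⟨j, d⟩
  rw [Finset.mem_erase, mem_boxes, mem_boxes, removeBox]
  obtain rfl | hji := eq_or_ne j i
  · simp [eraseCell, ← YoungDiagram.mem_cells]
  · simp [hji]

theorem mem_removableBoxes_addBox (hb : b ∈ addableBoxes lam) :
    b ∈ removableBoxes (addBox lam b hb) := by
  rw [mem_removableBoxes, addBox, Function.update_self]
  exact mem_removableCells_insertCell _

theorem mem_addableBoxes_removeBox (hb : b ∈ removableBoxes lam) :
    b ∈ addableBoxes (removeBox lam b hb) := by
  rw [mem_addableBoxes, removeBox, Function.update_self]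
  exact mem_addableCells_eraseCell _

theorem removeBox_addBox (hb : b ∈ addableBoxes lam) :
    removeBox (addBox lam b hb) b (mem_removableBoxes_addBox hb) = lam :=
  boxes_injective <| by
    rw [boxes_removeBox, boxes_addBox,
      Finset.erase_insert (notMem_boxes_of_mem_addableBoxes hb)]

theorem addBox_removeBox (hb : b ∈ removableBoxes lam) :
    addBox (removeBox lam b hb) b (mem_addableBoxes_removeBox hb) = lam :=
  boxes_injective <| by
    rw [boxes_addBox, boxes_removeBox, Finset.insert_erase (removableBoxes_subset_boxes hb)]

end Tuple

section BoxWeight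

variable {ι G : Type*} [AddCommGroup G] (a : ι → G) (q₁ q₂ : G)

/-- The weight `aᵢ + k q₁ + l q₂` of the (0-based) box `(k, l)` of the `i`-th diagram. -/
def boxWeight (b : Box ι) : G := a b.1 + b.2.1 • q₁ + b.2.2 • q₂

variable (i : ι) (k l : ℕ)

theorem boxWeight_zero_zero : boxWeight a q₁ q₂ ⟨i, 0, 0⟩ = a i := by
  simp [boxWeight]

theorem boxWeight_succ_left :
    boxWeight a q₁ q₂ ⟨i, k + 1, l⟩ = boxWeight a q₁ q₂ ⟨i, k, l⟩ + q₁ := by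
  simp only [boxWeight, succ_nsmul]
  abel

theorem boxWeight_succ_right :
    boxWeight a q₁ q₂ ⟨i, k, l + 1⟩ = boxWeight a q₁ q₂ ⟨i, k, l⟩ + q₂ := by
  simp only [boxWeight, succ_nsmul]
  abel

@[to_additive]
theorem prod_boxWeight_corners [Fintype ι] {M : Type*} [CommMonoid M]
    (lam : ι → YoungDiagram) (g : G → M) :
    (∏ i, g (a i)) * (∏ b ∈ boxes lam, g (boxWeight a q₁ q₂ b + q₁)) *
        (∏ b ∈ boxes lam, g (boxWeight a q₁ q₂ b + q₂)) *
        ∏ b ∈ removableBoxes lam, g (boxWeight a q₁ q₂ b + (q₁ + q₂)) =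
      (∏ b ∈ boxes lam, g (boxWeight a q₁ q₂ b)) *
        (∏ b ∈ boxes lam, g (boxWeight a q₁ q₂ b + (q₁ + q₂))) *
        ∏ b ∈ addableBoxes lam, g (boxWeight a q₁ q₂ b) := by
  have corners := fun i => prod_corners (lam i) fun c => g (boxWeight a q₁ q₂ ⟨i, c⟩)
  simp only [boxWeight_succ_left, boxWeight_succ_right, boxWeight_zero_zero, add_assoc] at corners
  simp only [boxes, addableBoxes, removableBoxes, Finset.prod_sigma, ← Finset.prod_mul_distrib]
  refine Finset.prod_congr rfl fun i _ => ?_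
  simpa only [Finset.prod_mul_distrib, add_comm q₁ q₂] using corners i

end BoxWeight

section TangentCharacter

variable {ι G : Type*} [AddCommGroup G]

local notation "exp[" g "]" => AddMonoidAlgebra.single g (1 : ℤ)

/-- The character `∑ e^w` of a set of boxes, over their weights `w`. The dual character is the
character for the opposite parameters `-a`, `-q₁`, `-q₂`. -/
def boxChar (a : ι → G) (q₁ q₂ : G) (s : Finset (Box ι)) : AddMonoidAlgebra ℤ G :=
  ∑ b ∈ s, exp[boxWeight a q₁ q₂ b]

/-- The tangent character `W K* + q₁ q₂ K W* - (1 - q₁) (1 - q₂) K K*` of a tuple of Young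
diagrams, where `W` is the character of the framing `a` and `K` that of the boxes. -/
def tangentChar [Fintype ι] (a : ι → G) (q₁ q₂ : G) (lam : ι → YoungDiagram) :
    AddMonoidAlgebra ℤ G :=
  (∑ i, exp[a i]) * boxChar (-a) (-q₁) (-q₂) (boxes lam) +
    exp[q₁ + q₂] * boxChar a q₁ q₂ (boxes lam) * ∑ i, exp[-a i] -
      (1 - exp[q₁]) * (1 - exp[q₂]) * boxChar a q₁ q₂ (boxes lam) *
        boxChar (-a) (-q₁) (-q₂) (boxes lam)

variable (a : ι → G) (q₁ q₂ : G)

theorem boxWeight_neg (b : Box ι) : boxWeight (-a) (-q₁) (-q₂) b = -boxWeight a q₁ q₂ b := by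
  simp only [boxWeight, Pi.neg_apply, smul_neg]
  abel

theorem single_mul_boxChar (g : G) (s : Finset (Box ι)) :
    exp[g] * boxChar a q₁ q₂ s = ∑ b ∈ s, exp[boxWeight a q₁ q₂ b + g] := by
  simp only [boxChar, Finset.mul_sum, AddMonoidAlgebra.single_mul_single, mul_one, add_comm g]

theorem sum_sub_boxChar_boxes [Fintype ι] (lam : ι → YoungDiagram) :
    (∑ i, exp[a i]) - (1 - exp[q₁]) * (1 - exp[q₂]) * boxChar a q₁ q₂ (boxes lam) =
      boxChar a q₁ q₂ (addableBoxes lam) -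
        exp[q₁ + q₂] * boxChar a q₁ q₂ (removableBoxes lam) := by
  have corners := sum_boxWeight_corners a q₁ q₂ lam fun g => exp[g]
  have hmul : exp[q₁] * exp[q₂] = exp[q₁ + q₂] := by simp [AddMonoidAlgebra.single_mul_single]
  simp only [← single_mul_boxChar] at corners
  simp only [boxChar] at corners ⊢
  linear_combination corners - (∑ b ∈ boxes lam, exp[boxWeight a q₁ q₂ b]) * hmul

theorem tangentChar_addBox [Fintype ι] [DecidableEq ι] {lam : ι → YoungDiagram} {b : Box ι}
    (hb : b ∈ addableBoxes lam) :
    tangentChar a q₁ q₂ (addBox lam b hb) - tangentChar a q₁ q₂ lam =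
      exp[-boxWeight a q₁ q₂ b] * (boxChar a q₁ q₂ (addableBoxes lam) -
          exp[q₁ + q₂] * boxChar a q₁ q₂ (removableBoxes lam)) +
        exp[boxWeight a q₁ q₂ b] *
          (exp[q₁ + q₂] * boxChar (-a) (-q₁) (-q₂) (addableBoxes (addBox lam b hb)) -
            boxChar (-a) (-q₁) (-q₂) (removableBoxes (addBox lam b hb))) := by
  have hchar (a : ι → G) (q₁ q₂ : G) : boxChar a q₁ q₂ (boxes (addBox lam b hb)) =
      exp[boxWeight a q₁ q₂ b] + boxChar a q₁ q₂ (boxes lam) := by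
    rw [boxChar, boxes_addBox, Finset.sum_insert (notMem_boxes_of_mem_addableBoxes hb), boxChar]
  have hmul (g h : G) : exp[g + h] = exp[g] * exp[h] := by
    rw [AddMonoidAlgebra.single_mul_single, mul_one]
  have hinv (g : G) : exp[g] * exp[-g] = 1 := by
    rw [← hmul, add_neg_cancel, AddMonoidAlgebra.one_def]
  have hdual : (1 - exp[q₁]) * (1 - exp[q₂]) =
      exp[q₁] * exp[q₂] * (1 - exp[-q₁]) * (1 - exp[-q₂]) := by
    linear_combination (exp[q₂] - 1) * hinv q₁ + (exp[q₁] - exp[q₁] * exp[-q₁]) * hinv q₂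
  have corners := sum_sub_boxChar_boxes a q₁ q₂ lam
  have dualCorners := sum_sub_boxChar_boxes (-a) (-q₁) (-q₂) (addBox lam b hb)
  simp only [tangentChar, hchar, boxWeight_neg, Pi.neg_apply, hmul] at corners dualCorners ⊢
  linear_combination exp[-boxWeight a q₁ q₂ b] * corners +
    exp[q₁] * exp[q₂] * exp[boxWeight a q₁ q₂ b] * dualCorners -
    exp[boxWeight a q₁ q₂ b] * (exp[-boxWeight a q₁ q₂ b] +
      boxChar (-a) (-q₁) (-q₂) (boxes lam)) * hdual -
    exp[boxWeight a q₁ q₂ b] *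
      boxChar (-a) (-q₁) (-q₂) (removableBoxes (addBox lam b hb)) *
      (exp[q₂] * exp[-q₂] * hinv q₁ + hinv q₂)

theorem tangentChar_addBox_eq_sum [Fintype ι] [DecidableEq ι] {lam : ι → YoungDiagram}
    {b : Box ι} (hb : b ∈ addableBoxes lam) :
    tangentChar a q₁ q₂ (addBox lam b hb) - tangentChar a q₁ q₂ lam =
      ∑ c ∈ addableBoxes lam, exp[boxWeight a q₁ q₂ c - boxWeight a q₁ q₂ b] -
        ∑ c ∈ removableBoxes lam, exp[boxWeight a q₁ q₂ c + (q₁ + q₂) - boxWeight a q₁ q₂ b] +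
          (∑ c ∈ addableBoxes (addBox lam b hb),
              exp[boxWeight a q₁ q₂ b - (boxWeight a q₁ q₂ c - (q₁ + q₂))] -
            ∑ c ∈ removableBoxes (addBox lam b hb),
              exp[boxWeight a q₁ q₂ b - boxWeight a q₁ q₂ c]) := by
  rw [tangentChar_addBox]
  simp only [mul_sub, single_mul_boxChar, Finset.mul_sum, AddMonoidAlgebra.single_mul_single,
    mul_one, boxWeight_neg]
  refine congrArg₂ _ (congrArg₂ _ ?_ ?_) (congrArg₂ _ ?_ ?_) <;>
    refine Finset.sum_congr rfl fun c _ => congrArg (AddMonoidAlgebra.single · 1) ?_ <;> abel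

/-- `T` is a multiset of tangent weights of `lam`. -/
def IsTangentWeights [Fintype ι] (a : ι → G) (q₁ q₂ : G) (lam : ι → YoungDiagram)
    (T : Multiset G) : Prop :=
  (T.map fun g => exp[g]).sum = tangentChar a q₁ q₂ lam

theorem map_single_sum_injective {H : Type*} :
    Function.Injective fun T : Multiset H => (T.map fun g => exp[g]).sum := by
  classical
  have hcount (T : Multiset H) (x : H) : (T.map fun g => exp[g]).sum.coeff x = T.count x := by
    induction T using Multiset.induction_on with
    | empty => simp
    | cons g T ih =>
      rw [Multiset.map_cons, Multiset.sum_cons, AddMonoidAlgebra.coeff_add, Finsupp.add_apply, ih,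
        AddMonoidAlgebra.coeff_single, Finsupp.single_apply, Multiset.count_cons, add_comm]
      simp [eq_comm]
  refine fun T T' h => Multiset.ext.2 fun x => ?_
  exact_mod_cast (hcount T x).symm.trans ((congrArg (·.coeff x) h).trans (hcount T' x))

theorem tangentWeights_addBox [Fintype ι] [DecidableEq ι] {lam : ι → YoungDiagram} {b : Box ι}
    (hb : b ∈ addableBoxes lam) {T T' : Multiset G} (hT : IsTangentWeights a q₁ q₂ lam T)
    (hT' : IsTangentWeights a q₁ q₂ (addBox lam b hb) T') :
    T' + (removableBoxes lam).val.map
          (fun c => boxWeight a q₁ q₂ c + (q₁ + q₂) - boxWeight a q₁ q₂ b) +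
        ((removableBoxes (addBox lam b hb)).erase b).val.map
          (fun c => boxWeight a q₁ q₂ b - boxWeight a q₁ q₂ c) =
      T + ((addableBoxes lam).erase b).val.map
          (fun c => boxWeight a q₁ q₂ c - boxWeight a q₁ q₂ b) +
        (addableBoxes (addBox lam b hb)).val.map
          (fun c => boxWeight a q₁ q₂ b - (boxWeight a q₁ q₂ c - (q₁ + q₂))) := by
  refine map_single_sum_injective ?_
  -- The box `b` itself contributes a zero weight to either side, which `erase` cancels.
  simp only [Multiset.map_add, Multiset.sum_add, Multiset.map_map, Function.comp_def,
    ← Finset.sum_eq_multiset_sum, Finset.sum_erase_eq_sub hb, sub_self,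
    Finset.sum_erase_eq_sub (mem_removableBoxes_addBox hb)]
  rw [IsTangentWeights] at hT hT'
  linear_combination tangentChar_addBox_eq_sum a q₁ q₂ hb + hT' - hT

end TangentCharacter

section PartialFractions

open Polynomial Lagrange

theorem div_nodal_sub_sum_mem_range {ι F : Type*} [DecidableEq ι] [Field F] {s : Finset ι}
    {v : ι → F} (hv : Set.InjOn v s) (p : F[X]) :
    algebraMap F[X] (RatFunc F) p / algebraMap F[X] (RatFunc F) (nodal s v) -
        ∑ i ∈ s, RatFunc.C (p.eval (v i) * nodalWeight s v i) / (RatFunc.X - RatFunc.C (v i)) ∈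
      (algebraMap F[X] (RatFunc F)).range := by
  have hdivmod := modByMonic_add_div p (nodal s v)
  have hmod : p %ₘ nodal s v = interpolate s v fun i => p.eval (v i) := by
    refine eq_interpolate_of_eval_eq _ hv ?_ fun i hi => ?_
    · exact (degree_modByMonic_lt p nodal_monic).trans_eq degree_nodal
    · nth_rw 2 [← hdivmod]
      rw [eval_add, eval_mul, eval_nodal_at_node hi, zero_mul, add_zero]
  have hpolar : (∑ i ∈ s, RatFunc.C (p.eval (v i) * nodalWeight s v i) /
      (RatFunc.X - RatFunc.C (v i))) * algebraMap F[X] (RatFunc F) (nodal s v) =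
        algebraMap F[X] (RatFunc F) (p %ₘ nodal s v) := by
    rw [hmod, interpolate_eq_nodalWeight_mul_nodal_div_X_sub_C, Finset.sum_mul, map_sum]
    refine Finset.sum_congr rfl fun i hi => ?_
    have hX : (RatFunc.X - RatFunc.C (v i) : RatFunc F) ≠ 0 := by
      simpa using RatFunc.algebraMap_ne_zero (X_sub_C_ne_zero (v i))
    rw [← nodal_erase_eq_nodal_div hi, nodal_eq_mul_nodal_erase hi, div_mul_eq_mul_div,
      div_eq_iff hX]
    simp only [map_mul, map_sub, RatFunc.algebraMap_X, RatFunc.algebraMap_C]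
    ring
  refine ⟨p /ₘ nodal s v, ?_⟩
  rw [eq_sub_iff_add_eq, eq_div_iff (RatFunc.algebraMap_ne_zero nodal_ne_zero), add_mul, hpolar,
    ← map_mul, ← map_add, mul_comm, add_comm, hdivmod]

end PartialFractions

section Residue

open Lagrange

variable {ι F Z : Type*} [Field F] [AddCommGroup Z]

section WeightProd

variable [DecidableEq Z]

/-- The product of the tangent weights of color `0`. -/
def weightProd (T : Multiset (F × Z)) : F := ((T.filter fun w => w.2 = 0).map Prod.fst).prod

theorem weightProd_add (S T : Multiset (F × Z)) :
    weightProd (S + T) = weightProd S * weightProd T := by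
  rw [weightProd, Multiset.filter_add, Multiset.map_add, Multiset.prod_add, weightProd, weightProd]

theorem weightProd_map_val {α : Type*} (s : Finset α) (f : α → F × Z) (p : α → Prop)
    [DecidablePred p] (hp : ∀ x, (f x).2 = 0 ↔ p x) :
    weightProd (s.val.map f) = ∏ x ∈ s with p x, (f x).1 := by
  rw [weightProd, Multiset.filter_map, Multiset.map_map, ← Finset.filter_congr fun x _ => hp x]
  rfl

end WeightProd

variable (a : ι → F × Z) (q₁ q₂ : F × Z)

/-- The content of a box: the `F`-component of its weight. -/
def boxContent (b : Box ι) : F := (boxWeight a q₁ q₂ b).1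

/-- The color of a box: the `Z`-component of its weight. -/
def boxColor (b : Box ι) : Z := (boxWeight a q₁ q₂ b).2

variable [Fintype ι]

section OfColor

variable [DecidableEq Z] (σ : Z) (lam : ι → YoungDiagram)

/-- The addable boxes of color `σ`. -/
def addableOfColor : Finset (Box ι) := {b ∈ addableBoxes lam | boxColor a q₁ q₂ b = σ}

/-- The removable boxes of color `σ`. -/
def removableOfColor : Finset (Box ι) := {b ∈ removableBoxes lam | boxColor a q₁ q₂ b = σ}

theorem card_addableOfColor (hq₁ : q₁.2 = 0) :
    (addableOfColor a q₁ q₂ σ lam).card =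
      (removableOfColor a q₁ q₂ (σ - (q₁ + q₂).2) lam).card +
        (Finset.univ.filter fun i => (a i).2 = σ).card := by
  have corners := sum_boxWeight_corners a q₁ q₂ lam fun w => if w.2 = σ then 1 else 0
  simp only [Prod.snd_add, hq₁, add_zero, zero_add] at corners
  unfold addableOfColor removableOfColor boxColor
  simp only [Finset.card_filter, eq_sub_iff_add_eq, Prod.snd_add, hq₁, zero_add]
  omega

end OfColor

variable {a q₁ q₂} {lam : ι → YoungDiagram} {b c : Box ι} {ω : Z}

theorem boxContent_add_ne_boxContent (hinj : Function.Injective (boxContent a q₁ q₂))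
    (hb : b ∈ removableBoxes lam) (hc : c ∈ addableBoxes lam) :
    boxContent a q₁ q₂ b + (q₁ + q₂).1 ≠ boxContent a q₁ q₂ c := by
  obtain ⟨i, k, l⟩ := b
  have hdiag : boxContent a q₁ q₂ ⟨i, k, l⟩ + (q₁ + q₂).1 =
      boxContent a q₁ q₂ ⟨i, k + 1, l + 1⟩ := by
    simp only [boxContent, boxWeight_succ_left, boxWeight_succ_right, Prod.fst_add]
    ring
  rw [hdiag, hinj.ne_iff]
  rintro rfl
  rw [mem_removableBoxes, mk_mem_removableCells_iff] at hb
  rw [mem_addableBoxes, mk_mem_addableCells_iff] at hc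
  exact hb.2.1 (hc.2.2 l rfl)

variable [DecidableEq Z] [DecidableEq ι]

theorem prod_sub_comm {α R : Type*} [CommRing R] (s : Finset α) (f g : α → R) :
    ∏ x ∈ s, (f x - g x) = (-1) ^ s.card * ∏ x ∈ s, (g x - f x) := by
  rw [← Finset.prod_neg]
  simp only [neg_sub]

theorem weightProd_addBox (hb : b ∈ addableBoxes lam) (hω : boxColor a q₁ q₂ b = ω)
    (hcard : (addableOfColor a q₁ q₂ ω lam).card =
      (removableOfColor a q₁ q₂ (ω - (q₁ + q₂).2) lam).card + 1)
    {T T' : Multiset (F × Z)} (hT : IsTangentWeights a q₁ q₂ lam T)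
    (hT' : IsTangentWeights a q₁ q₂ (addBox lam b hb) T') :
    weightProd T' *
          (∏ c ∈ removableOfColor a q₁ q₂ (ω - (q₁ + q₂).2) lam,
            (boxContent a q₁ q₂ b - (boxContent a q₁ q₂ c + (q₁ + q₂).1))) *
        (∏ c ∈ (removableOfColor a q₁ q₂ ω (addBox lam b hb)).erase b,
            (boxContent a q₁ q₂ b - boxContent a q₁ q₂ c)) =
      weightProd T *
          (∏ c ∈ (addableOfColor a q₁ q₂ ω lam).erase b,
            (boxContent a q₁ q₂ b - boxContent a q₁ q₂ c)) *
        (∏ c ∈ addableOfColor a q₁ q₂ (ω + (q₁ + q₂).2) (addBox lam b hb),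
            (boxContent a q₁ q₂ b - (boxContent a q₁ q₂ c - (q₁ + q₂).1))) := by
  have hweights := congrArg weightProd (tangentWeights_addBox a q₁ q₂ hb hT hT')
  rw [weightProd_add, weightProd_add, weightProd_add, weightProd_add,
    weightProd_map_val (removableBoxes lam) _ (boxColor a q₁ q₂ · = ω - (q₁ + q₂).2)
      fun c => by rw [← hω, eq_sub_iff_add_eq]; exact sub_eq_zero,
    weightProd_map_val ((removableBoxes _).erase b) _ (boxColor a q₁ q₂ · = ω)
      fun c => by rw [← hω]; exact sub_eq_zero.trans eq_comm,
    weightProd_map_val ((addableBoxes lam).erase b) _ (boxColor a q₁ q₂ · = ω)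
      fun c => by rw [← hω]; exact sub_eq_zero,
    weightProd_map_val (addableBoxes (addBox lam b hb)) _
      (boxColor a q₁ q₂ · = ω + (q₁ + q₂).2)
      fun c => by rw [← hω, ← sub_eq_iff_eq_add]; exact sub_eq_zero.trans eq_comm,
    Finset.filter_erase, Finset.filter_erase] at hweights
  have hmem : b ∈ addableOfColor a q₁ q₂ ω lam := Finset.mem_filter.2 ⟨hb, hω⟩
  -- `Y_ω` has degree `1`, so reversing all the differences below costs the same sign on both sides.
  have hcard' : ((addableOfColor a q₁ q₂ ω lam).erase b).card =
      (removableOfColor a q₁ q₂ (ω - (q₁ + q₂).2) lam).card := by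
    rw [Finset.card_erase_of_mem hmem, hcard, Nat.add_sub_cancel]
  change _ * (∏ c ∈ removableOfColor a q₁ q₂ _ lam,
      (boxContent a q₁ q₂ c + (q₁ + q₂).1 - boxContent a q₁ q₂ b)) * _ =
    _ * (∏ c ∈ (addableOfColor a q₁ q₂ ω lam).erase b,
      (boxContent a q₁ q₂ c - boxContent a q₁ q₂ b)) * _ at hweights
  rw [prod_sub_comm, prod_sub_comm (Finset.erase _ _), hcard', mul_left_comm,
    mul_left_comm (weightProd T), mul_assoc (_ ^ _), mul_assoc (_ ^ _)] at hweights
  exact mul_left_cancel₀ (pow_ne_zero _ (neg_ne_zero.2 one_ne_zero)) hweights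

/-- The residue of `Y_{ω + q}(x + q)` at the content of a removable box `b` of color `ω`, where
`q = q₁ + q₂`. -/
def shiftedYResidue (a : ι → F × Z) (q₁ q₂ : F × Z) (ω : Z) (lam : ι → YoungDiagram)
    (b : Box ι) : F :=
  (nodal (addableOfColor a q₁ q₂ (ω + (q₁ + q₂).2) lam)
      fun c => boxContent a q₁ q₂ c - (q₁ + q₂).1).eval (boxContent a q₁ q₂ b) *
    nodalWeight (removableOfColor a q₁ q₂ ω lam) (boxContent a q₁ q₂) b

/-- The residue of `1 / Y_ω(x)` at the content of an addable box `b` of color `ω`. -/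
def invYResidue (a : ι → F × Z) (q₁ q₂ : F × Z) (ω : Z) (lam : ι → YoungDiagram)
    (b : Box ι) : F :=
  (nodal (removableOfColor a q₁ q₂ (ω - (q₁ + q₂).2) lam)
      fun c => boxContent a q₁ q₂ c + (q₁ + q₂).1).eval (boxContent a q₁ q₂ b) *
    nodalWeight (addableOfColor a q₁ q₂ ω lam) (boxContent a q₁ q₂) b

theorem shiftedYResidue_addBox (hinj : Function.Injective (boxContent a q₁ q₂))
    (hb : b ∈ addableBoxes lam) (hω : boxColor a q₁ q₂ b = ω)
    (hcard : (addableOfColor a q₁ q₂ ω lam).card =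
      (removableOfColor a q₁ q₂ (ω - (q₁ + q₂).2) lam).card + 1)
    {T T' : Multiset (F × Z)} (hT : IsTangentWeights a q₁ q₂ lam T)
    (hT' : IsTangentWeights a q₁ q₂ (addBox lam b hb) T') :
    shiftedYResidue a q₁ q₂ ω (addBox lam b hb) b / weightProd T' =
      invYResidue a q₁ q₂ ω lam b / weightProd T := by
  have hA : ∏ c ∈ addableOfColor a q₁ q₂ (ω + (q₁ + q₂).2) (addBox lam b hb),
      (boxContent a q₁ q₂ b - (boxContent a q₁ q₂ c - (q₁ + q₂).1)) ≠ 0 := by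
    refine Finset.prod_ne_zero_iff.2 fun c hc h => ?_
    exact boxContent_add_ne_boxContent hinj (mem_removableBoxes_addBox hb)
      (Finset.mem_filter.1 hc).1 (by linear_combination h)
  have hR : ∏ c ∈ removableOfColor a q₁ q₂ (ω - (q₁ + q₂).2) lam,
      (boxContent a q₁ q₂ b - (boxContent a q₁ q₂ c + (q₁ + q₂).1)) ≠ 0 := by
    refine Finset.prod_ne_zero_iff.2 fun c hc h => ?_
    exact boxContent_add_ne_boxContent hinj (Finset.mem_filter.1 hc).1 hb
      (by linear_combination -h)
  have hweights := weightProd_addBox hb hω hcard hT hT'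
  rw [shiftedYResidue, invYResidue, eval_nodal, eval_nodal, nodalWeight, nodalWeight,
    Finset.prod_inv_distrib, Finset.prod_inv_distrib, ← div_eq_mul_inv, ← div_eq_mul_inv,
    div_div, div_div, ← mul_div_mul_right _ (_ * weightProd T') hR,
    ← mul_div_mul_right _ (_ * weightProd T) hA]
  exact congrArg₂ _ (mul_comm _ _) (by linear_combination hweights)

end Residue

section YObservable

open Polynomial Lagrange

variable {ι F Z : Type*} [Field F] [DecidableEq Z]

/-- The contribution of a weight to the observable `Y_σ(x + s)`: the factor `x + s - w` for a
weight `w` of color `σ`, and `1` for the other weights. -/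
def yFactor (σ : Z) (s : F) (w : F × Z) : RatFunc F :=
  if w.2 = σ then RatFunc.X + RatFunc.C s - RatFunc.C w.1 else 1

theorem yFactor_eq_algebraMap (σ : Z) (s : F) (w : F × Z) :
    yFactor σ s w = algebraMap F[X] (RatFunc F) (if w.2 = σ then X - C (w.1 - s) else 1) := by
  rw [yFactor, apply_ite (algebraMap F[X] (RatFunc F)), map_one, map_sub, RatFunc.algebraMap_X,
    RatFunc.algebraMap_C, map_sub, sub_sub_eq_add_sub]

theorem yFactor_ne_zero (σ : Z) (s : F) (w : F × Z) : yFactor σ s w ≠ 0 := by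
  rw [yFactor_eq_algebraMap]
  refine RatFunc.algebraMap_ne_zero ?_
  split_ifs
  exacts [X_sub_C_ne_zero _, one_ne_zero]

theorem prod_yFactor {α : Type*} (σ : Z) (t : Finset α) (f : α → F × Z) (s : F) :
    ∏ x ∈ t, yFactor σ s (f x) =
      algebraMap F[X] (RatFunc F) (nodal {x ∈ t | (f x).2 = σ} fun x => (f x).1 - s) := by
  simp only [yFactor_eq_algebraMap, ← map_prod, nodal, Finset.prod_filter]

variable [Fintype ι] [AddCommGroup Z] (a : ι → F × Z) (q₁ q₂ : F × Z) (σ : Z)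
  (lam : ι → YoungDiagram)

/-- The colored Y-observable `Y_σ(x + s)` of a tuple of Young diagrams. -/
def yObservable (s : F) : RatFunc F :=
  (∏ i, yFactor σ s (a i)) * ∏ b ∈ boxes lam,
    yFactor σ s (boxWeight a q₁ q₂ b + q₁) * yFactor σ s (boxWeight a q₁ q₂ b + q₂) /
      (yFactor σ s (boxWeight a q₁ q₂ b) * yFactor σ s (boxWeight a q₁ q₂ b + (q₁ + q₂)))

theorem yObservable_eq_div (s : F) :
    yObservable a q₁ q₂ σ lam s =
      algebraMap F[X] (RatFunc F)
          (nodal (addableOfColor a q₁ q₂ σ lam) fun c => boxContent a q₁ q₂ c - s) /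
        algebraMap F[X] (RatFunc F) (nodal (removableOfColor a q₁ q₂ (σ - (q₁ + q₂).2) lam)
          fun c => boxContent a q₁ q₂ c + (q₁ + q₂).1 - s) := by
  have corners := prod_boxWeight_corners a q₁ q₂ lam (yFactor σ s)
  have hne (f : Box ι → F × Z) (t : Finset (Box ι)) : ∏ b ∈ t, yFactor σ s (f b) ≠ 0 :=
    Finset.prod_ne_zero_iff.2 fun b _ => yFactor_ne_zero σ s (f b)
  have hA : algebraMap F[X] (RatFunc F)
      (nodal (addableOfColor a q₁ q₂ σ lam) fun c => boxContent a q₁ q₂ c - s) =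
        ∏ b ∈ addableBoxes lam, yFactor σ s (boxWeight a q₁ q₂ b) :=
    (prod_yFactor σ _ _ s).symm
  have hR : algebraMap F[X] (RatFunc F) (nodal (removableOfColor a q₁ q₂ (σ - (q₁ + q₂).2) lam)
      fun c => boxContent a q₁ q₂ c + (q₁ + q₂).1 - s) =
        ∏ b ∈ removableBoxes lam, yFactor σ s (boxWeight a q₁ q₂ b + (q₁ + q₂)) := by
    rw [prod_yFactor, removableOfColor, Finset.filter_congr fun _ _ => eq_sub_iff_add_eq]
    rfl
  rw [hA, hR, eq_div_iff (hne _ _), yObservable, Finset.prod_div_distrib, Finset.prod_mul_distrib,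
    Finset.prod_mul_distrib, mul_div_assoc', div_mul_eq_mul_div,
    div_eq_iff (mul_ne_zero (hne _ _) (hne _ _)), ← mul_assoc, corners, mul_comm]

variable [DecidableEq ι]

theorem yObservable_shift_sub_sum_mem_range (hinj : Function.Injective (boxContent a q₁ q₂)) :
    yObservable a q₁ q₂ (σ + (q₁ + q₂).2) lam (q₁ + q₂).1 -
        ∑ b ∈ removableOfColor a q₁ q₂ σ lam,
          RatFunc.C (shiftedYResidue a q₁ q₂ σ lam b) /
            (RatFunc.X - RatFunc.C (boxContent a q₁ q₂ b)) ∈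
      (algebraMap F[X] (RatFunc F)).range := by
  simp only [yObservable_eq_div, add_sub_cancel_right]
  exact div_nodal_sub_sum_mem_range hinj.injOn _

theorem div_yObservable_sub_sum_mem_range (hinj : Function.Injective (boxContent a q₁ q₂))
    (p : F[X]) :
    algebraMap F[X] (RatFunc F) p / yObservable a q₁ q₂ σ lam 0 -
        ∑ b ∈ addableOfColor a q₁ q₂ σ lam,
          RatFunc.C (p.eval (boxContent a q₁ q₂ b) * invYResidue a q₁ q₂ σ lam b) /
            (RatFunc.X - RatFunc.C (boxContent a q₁ q₂ b)) ∈
      (algebraMap F[X] (RatFunc F)).range := by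
  simp only [yObservable_eq_div, sub_zero, div_div_eq_mul_div, ← map_mul, invYResidue,
    ← mul_assoc, ← eval_mul]
  exact div_nodal_sub_sum_mem_range hinj.injOn _

end YObservable

section Charge

variable {ι F Z : Type*} [Fintype ι] [Field F] [AddCommGroup Z] [DecidableEq Z]
  (a : ι → F × Z) (q₁ q₂ : F × Z)

/-- The instanton charge of a tuple of Young diagrams: the number of its boxes of each color. -/
def charge (lam : ι → YoungDiagram) (σ : Z) : ℕ :=
  (Finset.filter (boxColor a q₁ q₂ · = σ) (boxes lam)).card

theorem finite_setOf_charge_le [Finite Z] (k : Z → ℕ) :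
    {lam : ι → YoungDiagram | charge a q₁ q₂ lam ≤ k}.Finite := by
  have := Fintype.ofFinite Z
  refine (Set.Finite.pi' fun _ : ι => finite_setOf_card_le (∑ σ, k σ)).subset
    fun lam hlam i => ?_
  calc (lam i).card
      ≤ ∑ j, (lam j).card := Finset.single_le_sum (f := fun j => (lam j).card)
        (fun _ _ => Nat.zero_le _) (Finset.mem_univ i)
    _ = (boxes lam).card := (Finset.card_sigma _ _).symm
    _ = ∑ σ, charge a q₁ q₂ lam σ :=
        Finset.card_eq_sum_card_fiberwise fun _ _ => Finset.mem_coe.2 (Finset.mem_univ _)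
    _ ≤ ∑ σ, k σ := Finset.sum_le_sum fun σ _ => hlam σ

variable [DecidableEq ι] {lam : ι → YoungDiagram} {b : Box ι}

theorem charge_addBox (hb : b ∈ addableBoxes lam) :
    charge a q₁ q₂ (addBox lam b hb) =
      charge a q₁ q₂ lam + Pi.single (boxColor a q₁ q₂ b) 1 := by
  ext σ
  rw [charge, boxes_addBox, Finset.filter_insert, Pi.add_apply, charge]
  obtain rfl | hσ := eq_or_ne (boxColor a q₁ q₂ b) σ
  · rw [if_pos rfl, Pi.single_eq_same, Finset.card_insert_of_notMem fun h =>
      notMem_boxes_of_mem_addableBoxes hb (Finset.mem_filter.1 h).1]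
  · rw [if_neg hσ, Pi.single_eq_of_ne' hσ, add_zero]

theorem sum_removableOfColor_eq_sum_addableOfColor {M : Type*} [AddCommMonoid M] {ω : Z}
    {S S' : Finset (ι → YoungDiagram)}
    (hS : ∀ lam b hb, boxColor a q₁ q₂ b = ω → (addBox lam b hb ∈ S ↔ lam ∈ S'))
    {f g : (ι → YoungDiagram) → Box ι → M}
    (hfg : ∀ lam b hb, boxColor a q₁ q₂ b = ω → f (addBox lam b hb) b = g lam b) :
    ∑ lam ∈ S, ∑ b ∈ removableOfColor a q₁ q₂ ω lam, f lam b =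
      ∑ lam ∈ S', ∑ b ∈ addableOfColor a q₁ q₂ ω lam, g lam b := by
  rw [Finset.sum_sigma', Finset.sum_sigma']
  have hrem {x} (hx : x ∈ S.sigma (removableOfColor a q₁ q₂ ω)) : x.2 ∈ removableBoxes x.1 :=
    (Finset.mem_filter.1 (Finset.mem_sigma.1 hx).2).1
  have hadd {x} (hx : x ∈ S'.sigma (addableOfColor a q₁ q₂ ω)) : x.2 ∈ addableBoxes x.1 :=
    (Finset.mem_filter.1 (Finset.mem_sigma.1 hx).2).1
  refine Finset.sum_bij' (fun x hx => ⟨removeBox x.1 x.2 (hrem hx), x.2⟩)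
    (fun x hx => ⟨addBox x.1 x.2 (hadd hx), x.2⟩) (fun x hx => ?_) (fun x hx => ?_)
    (fun x hx => ?_) (fun x hx => ?_) fun x hx => ?_
  · obtain ⟨hxS, hω⟩ := Finset.mem_sigma.1 hx
    have hb := mem_addableBoxes_removeBox (hrem hx)
    have hω := (Finset.mem_filter.1 hω).2
    rw [← addBox_removeBox (hrem hx), hS _ _ hb hω] at hxS
    exact Finset.mem_sigma.2 ⟨hxS, Finset.mem_filter.2 ⟨hb, hω⟩⟩
  · obtain ⟨hxS, hω⟩ := Finset.mem_sigma.1 hx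
    have hω := (Finset.mem_filter.1 hω).2
    exact Finset.mem_sigma.2 ⟨(hS _ _ (hadd hx) hω).2 hxS,
      Finset.mem_filter.2 ⟨mem_removableBoxes_addBox (hadd hx), hω⟩⟩
  · exact Sigma.ext (addBox_removeBox (hrem hx)) HEq.rfl
  · exact Sigma.ext (removeBox_addBox (hadd hx)) HEq.rfl
  · rw [← hfg _ _ (mem_addableBoxes_removeBox (hrem hx))
      (Finset.mem_filter.1 (Finset.mem_sigma.1 hx).2).2, addBox_removeBox (hrem hx)]

end Charge

section Regularity

open Polynomial

variable {ι F Z : Type*} [Fintype ι] [Field F] [AddCommGroup Z] [DecidableEq Z]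
  (a : ι → F × Z) (q₁ q₂ : F × Z)

/-- The pseudo-measure weight of a tuple of Young diagrams with matter factor `m` and tangent
weights `T`. -/
def pseudoMeasure (m : F × Z → F) (T : (ι → YoungDiagram) → Multiset (F × Z))
    (lam : ι → YoungDiagram) : F :=
  (∏ b ∈ boxes lam, m (boxWeight a q₁ q₂ b)) / weightProd (T lam)

variable {a q₁ q₂} [DecidableEq ι] (hinj : Function.Injective (boxContent a q₁ q₂))
  (hq₁ : q₁.2 = 0) {ω : Z} (hframing : (Finset.univ.filter fun i => (a i).2 = ω).card = 1)
  {T : (ι → YoungDiagram) → Multiset (F × Z)}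
  (hT : ∀ lam, IsTangentWeights a q₁ q₂ lam (T lam))
  {m : F × Z → F} {p : F[X]} (hm : ∀ x, m (x, ω) = -p.eval x)

include hinj hq₁ hframing hT hm

theorem pseudoMeasure_addBox_mul_shiftedYResidue {lam : ι → YoungDiagram} {b : Box ι}
    (hb : b ∈ addableBoxes lam) (hω : boxColor a q₁ q₂ b = ω) :
    pseudoMeasure a q₁ q₂ m T (addBox lam b hb) *
        shiftedYResidue a q₁ q₂ ω (addBox lam b hb) b =
      -(pseudoMeasure a q₁ q₂ m T lam *
        (p.eval (boxContent a q₁ q₂ b) * invYResidue a q₁ q₂ ω lam b)) := by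
  have hmb : m (boxWeight a q₁ q₂ b) = -p.eval (boxContent a q₁ q₂ b) := by
    rw [← hm, ← hω]
    rfl
  have hres := shiftedYResidue_addBox hinj hb hω
    ((card_addableOfColor a q₁ q₂ ω lam hq₁).trans (by rw [hframing])) (hT _) (hT _)
  rw [pseudoMeasure, boxes_addBox, Finset.prod_insert (notMem_boxes_of_mem_addableBoxes hb), hmb,
    div_mul_eq_mul_div, mul_div_assoc, hres, pseudoMeasure]
  ring

theorem qqCharacter_average_mem_range {S S' : Finset (ι → YoungDiagram)}
    (hS : ∀ lam b hb, boxColor a q₁ q₂ b = ω → (addBox lam b hb ∈ S ↔ lam ∈ S')) :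
    ∑ lam ∈ S, RatFunc.C (pseudoMeasure a q₁ q₂ m T lam) *
          yObservable a q₁ q₂ (ω + (q₁ + q₂).2) lam (q₁ + q₂).1 +
        ∑ lam ∈ S', RatFunc.C (pseudoMeasure a q₁ q₂ m T lam) *
          (algebraMap F[X] (RatFunc F) p / yObservable a q₁ q₂ ω lam 0) ∈
      (algebraMap F[X] (RatFunc F)).range := by
  have hC (z : F) : RatFunc.C z ∈ (algebraMap F[X] (RatFunc F)).range :=
    ⟨C z, RatFunc.algebraMap_C z⟩
  have hshift := sum_mem fun lam (_ : lam ∈ S) =>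
    mul_mem (hC (pseudoMeasure a q₁ q₂ m T lam))
      (yObservable_shift_sub_sum_mem_range a q₁ q₂ ω lam hinj)
  have hinv := sum_mem fun lam (_ : lam ∈ S') =>
    mul_mem (hC (pseudoMeasure a q₁ q₂ m T lam))
      (div_yObservable_sub_sum_mem_range a q₁ q₂ ω lam hinj p)
  have hpoles := sum_removableOfColor_eq_sum_addableOfColor a q₁ q₂ hS
    (f := fun lam b => RatFunc.C (pseudoMeasure a q₁ q₂ m T lam *
      shiftedYResidue a q₁ q₂ ω lam b) / (RatFunc.X - RatFunc.C (boxContent a q₁ q₂ b)))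
    (g := fun lam b => -(RatFunc.C (pseudoMeasure a q₁ q₂ m T lam *
      (p.eval (boxContent a q₁ q₂ b) * invYResidue a q₁ q₂ ω lam b)) /
        (RatFunc.X - RatFunc.C (boxContent a q₁ q₂ b))))
    fun lam b hb hω => by
      rw [pseudoMeasure_addBox_mul_shiftedYResidue hinj hq₁ hframing hT hm hb hω, map_neg, neg_div]
  simp only [mul_sub, Finset.sum_sub_distrib, Finset.mul_sum, mul_div_assoc', ← map_mul]
    at hshift hinv ⊢
  simp only [Finset.sum_neg_distrib] at hpoles
  convert add_mem hshift hinv using 1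
  rw [hpoles]
  ring

end Regularity

section Colored

variable {N : ℕ} (ε₁ ε₂t : ℂ) (aT : ZMod N → ℂ)

/-- The framing of the regular `ℤ/N`-colored setup: the Coulomb parameter of color `σ`, colored
by `σ`. -/
def coloredFraming (σ : ZMod N) : ℂ × ZMod N := (aT σ, σ)

theorem boxWeight_coloredFraming (b : Box (ZMod N)) :
    boxWeight (coloredFraming aT) (ε₁, 0) (ε₂t, 1) b =
      (aT b.1 + ctil ε₁ ε₂t b.2, b.1 + (b.2.2 : ZMod N)) := by
  simp [boxWeight, coloredFraming, ctil, add_assoc]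

variable {ε₁ ε₂t aT} in
theorem boxContent_coloredFraming_injective
    (hgen : ∀ ω' ω'' : ZMod N, ∀ i j : ℤ,
      aT ω' - aT ω'' + (i : ℂ) * ε₁ + (j : ℂ) * ε₂t = 0 → ω' = ω'' ∧ i = 0 ∧ j = 0) :
    Function.Injective (boxContent (coloredFraming aT) (ε₁, 0) (ε₂t, 1)) := by
  rintro ⟨σ, i, j⟩ ⟨σ', i', j'⟩ h
  simp only [boxContent, boxWeight_coloredFraming, ctil] at h
  obtain ⟨rfl, hi, hj⟩ := hgen σ σ' (i - i') (j - j') (by push_cast; linear_combination h)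
  rw [sub_eq_zero, Nat.cast_inj] at hi hj
  rw [hi, hj]

theorem card_filter_coloredFraming [NeZero N] (ω : ZMod N) :
    (Finset.univ.filter fun σ => (coloredFraming aT σ).2 = ω).card = 1 :=
  Finset.card_eq_one.2 ⟨ω, (Finset.filter_eq' _ ω).trans (if_pos (Finset.mem_univ ω))⟩

theorem e2_add (v w : ℂ × ZMod N) : e2 N (v + w) = e2 N v * e2 N w := by
  rw [e2, e2, e2, AddMonoidAlgebra.single_mul_single, mul_one]

theorem boxChar_coloredFraming [NeZero N] (lam : ZMod N → YoungDiagram) :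
    boxChar (coloredFraming aT) (ε₁, 0) (ε₂t, 1) (boxes lam) =
      ∑ σ, e2 N (aT σ, σ) * chiT N ε₁ ε₂t (lam σ) := by
  simp only [boxChar, boxes, Finset.sum_sigma, chiT, Finset.mul_sum, ← e2_add,
    boxWeight_coloredFraming]
  rfl

theorem boxChar_neg_coloredFraming [NeZero N] (lam : ZMod N → YoungDiagram) :
    boxChar (-coloredFraming aT) (-(ε₁, 0)) (-(ε₂t, 1)) (boxes lam) =
      ∑ σ, e2 N (-(aT σ, σ)) * chiTstar N ε₁ ε₂t (lam σ) := by
  simp only [boxChar, boxes, Finset.sum_sigma, chiTstar, Finset.mul_sum, ← e2_add,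
    boxWeight_neg, boxWeight_coloredFraming]
  simp only [Prod.neg_mk, Prod.mk_add_mk, neg_add]
  rfl

variable [NeZero N]

theorem colChar_eq_tangentChar (lam : ZMod N → YoungDiagram) :
    colChar N ε₁ ε₂t aT lam = tangentChar (coloredFraming aT) (ε₁, 0) (ε₂t, 1) lam := by
  have hsub (σ τ : ZMod N) :
      e2 N (aT σ - aT τ, σ - τ) = e2 N (aT σ, σ) * e2 N (-(aT τ, τ)) := by
    rw [← e2_add, ← sub_eq_add_neg, Prod.mk_sub_mk]
  have hq : AddMonoidAlgebra.single ((ε₁, 0) + (ε₂t, 1)) 1 = e2 N (ε₁ + ε₂t, 1) := by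
    rw [e2, Prod.mk_add_mk, zero_add]
  rw [tangentChar, boxChar_coloredFraming, boxChar_neg_coloredFraming, hq]
  change _ = (∑ σ, e2 N (aT σ, σ)) * _ + _ * ∑ τ, e2 N (-(aT τ, τ)) -
    (1 - e2 N (ε₁, 0)) * (1 - e2 N (ε₂t, 1)) * _ * _
  rw [mul_assoc, Finset.sum_mul_sum, mul_assoc _ _ (∑ τ, _), Finset.sum_mul_sum,
    Finset.sum_mul_sum]
  simp only [colChar, hsub, Finset.mul_sum, ← Finset.sum_add_distrib, ← Finset.sum_sub_distrib]
  refine Finset.sum_congr rfl fun σ _ => Finset.sum_congr rfl fun τ _ => ?_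
  ring

theorem kcharge_eq_charge (lam : ZMod N → YoungDiagram) (σ : ZMod N) :
    kcharge N lam σ = charge (coloredFraming aT) (ε₁, 0) (ε₂t, 1) lam σ := by
  simp only [kcharge, charge, boxColor, boxWeight_coloredFraming, boxes, Finset.card_filter,
    Finset.sum_sigma]

theorem setOf_kcharge_eq (kb : ZMod N → ℕ) :
    {lam : ZMod N → YoungDiagram | ∀ σ, kcharge N lam σ = kb σ} =
      {lam | charge (coloredFraming aT) (ε₁, 0) (ε₂t, 1) lam = kb} := by
  simp only [kcharge_eq_charge ε₁ ε₂t aT, funext_iff]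

theorem setOf_kcharge_add_eq (ω : ZMod N) (kb : ZMod N → ℕ) :
    {lam : ZMod N → YoungDiagram | ∀ σ, kcharge N lam σ + (if σ = ω then 1 else 0) = kb σ} =
      {lam | charge (coloredFraming aT) (ε₁, 0) (ε₂t, 1) lam + Pi.single ω 1 = kb} := by
  simp only [kcharge_eq_charge ε₁ ε₂t aT, funext_iff, Pi.add_apply, Pi.single_apply]

theorem Ycol_eq_yObservable (σ : ZMod N) (s : ℂ) (lam : ZMod N → YoungDiagram) :
    Ycol N ε₁ ε₂t aT σ s lam =
      yObservable (coloredFraming aT) (ε₁, 0) (ε₂t, 1) σ lam s := by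
  have hframing : ∏ i, yFactor σ s (coloredFraming aT i) =
      RatFunc.X + RatFunc.C s - RatFunc.C (aT σ) :=
    (Finset.prod_ite_eq' _ _ _).trans (if_pos (Finset.mem_univ σ))
  rw [Ycol, yObservable, hframing, boxes, Finset.prod_sigma]
  refine congrArg _ (Finset.prod_congr rfl fun τ _ => Finset.prod_congr rfl fun c _ => ?_)
  simp only [boxWeight_coloredFraming, yFactor, Prod.mk_add_mk, add_zero, zero_add, add_assoc,
    eq_sub_iff_add_eq]
  split_ifs <;> simp only [mul_one, one_mul, mul_div_mul_comm, div_self one_ne_zero]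

theorem muOrb_eq_pseudoMeasure (mp mm : ZMod N → ℂ)
    (T : (ZMod N → YoungDiagram) → Multiset (ℂ × ZMod N)) (lam : ZMod N → YoungDiagram) :
    muOrb N ε₁ ε₂t aT mp mm T lam =
      pseudoMeasure (coloredFraming aT) (ε₁, 0) (ε₂t, 1)
        (fun w => (w.1 - mp w.2) * (mm w.2 - w.1)) T lam := by
  simp only [muOrb, pseudoMeasure, weightProd, boxes, Finset.prod_sigma,
    boxWeight_coloredFraming, sub_add_eq_sub_sub]

end Colored

/-- Regularity of the averaged fractional qq-character
`𝒳_ω(x) = Y_{ω+1}(x+ε̃) + 𝔮_ω·P_ω(x)/Y_ω(x)`: for every color `ω` and every profile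
`k̄` of instanton charges (i.e. coefficientwise in the fractional couplings), the
average against the orbifold pseudo-measure has no poles in `x`. -/
theorem colored_qq_character_regular (N : ℕ) [NeZero N]
    (ε₁ ε₂t : ℂ) (aT mp mm : ZMod N → ℂ)
    (hgen : ∀ ω' ω'' : ZMod N, ∀ i j : ℤ,
      aT ω' - aT ω'' + (i : ℂ) * ε₁ + (j : ℂ) * ε₂t = 0 → ω' = ω'' ∧ i = 0 ∧ j = 0)
    (T : (ZMod N → YoungDiagram) → Multiset (ℂ × ZMod N))
    (hT : ∀ lam : ZMod N → YoungDiagram,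
      ((T lam).map fun w => AddMonoidAlgebra.single w (1 : ℤ)).sum =
        colChar N ε₁ ε₂t aT lam)
    (ω : ZMod N) (kb : ZMod N → ℕ) :
    ∃ p : Polynomial ℂ,
      (∑ᶠ lam ∈ {lam : ZMod N → YoungDiagram | ∀ σ : ZMod N, kcharge N lam σ = kb σ},
          RatFunc.C (muOrb N ε₁ ε₂t aT mp mm T lam) *
            Ycol N ε₁ ε₂t aT (ω + 1) (ε₁ + ε₂t) lam) +
        (∑ᶠ lam ∈ {lam : ZMod N → YoungDiagram |
            ∀ σ : ZMod N, kcharge N lam σ + (if σ = ω then 1 else 0) = kb σ},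
          RatFunc.C (muOrb N ε₁ ε₂t aT mp mm T lam) *
            ((RatFunc.X - RatFunc.C (mp ω)) * (RatFunc.X - RatFunc.C (mm ω)) /
              Ycol N ε₁ ε₂t aT ω 0 lam)) =
      algebraMap (Polynomial ℂ) (RatFunc ℂ) p := by
  have hfin : {lam : ZMod N → YoungDiagram |
      charge (coloredFraming aT) (ε₁, 0) (ε₂t, 1) lam = kb}.Finite :=
    (finite_setOf_charge_le _ _ _ kb).subset fun _ h => h.le
  have hfin' : {lam : ZMod N → YoungDiagram |
      charge (coloredFraming aT) (ε₁, 0) (ε₂t, 1) lam + Pi.single ω 1 = kb}.Finite :=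
    (finite_setOf_charge_le _ _ _ kb).subset fun _ h => h ▸ le_self_add
  have hT' (lam : ZMod N → YoungDiagram) :
      IsTangentWeights (coloredFraming aT) (ε₁, 0) (ε₂t, 1) lam (T lam) :=
    (hT lam).trans (colChar_eq_tangentChar ε₁ ε₂t aT lam)
  obtain ⟨p, hp⟩ := qqCharacter_average_mem_range (boxContent_coloredFraming_injective hgen) rfl
    (card_filter_coloredFraming aT ω) hT' (m := fun w => (w.1 - mp w.2) * (mm w.2 - w.1))
    (p := (Polynomial.X - Polynomial.C (mp ω)) * (Polynomial.X - Polynomial.C (mm ω)))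
    (fun x => by
      rw [Polynomial.eval_mul, Polynomial.eval_sub, Polynomial.eval_sub, Polynomial.eval_X,
        Polynomial.eval_C, Polynomial.eval_C, ← mul_neg, neg_sub])
    (S := hfin.toFinset) (S' := hfin'.toFinset) fun lam b hb hω => by
      rw [Set.Finite.mem_toFinset, Set.Finite.mem_toFinset, Set.mem_ofPred_eq, charge_addBox, hω,
        Set.mem_ofPred_eq]
  refine ⟨p, ?_⟩
  simp only [hp, setOf_kcharge_eq ε₁ ε₂t aT, setOf_kcharge_add_eq ε₁ ε₂t aT,
    finsum_mem_eq_finite_toFinset_sum _ hfin, finsum_mem_eq_finite_toFinset_sum _ hfin',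
    muOrb_eq_pseudoMeasure, Ycol_eq_yObservable, Prod.mk_add_mk, zero_add, map_mul, map_sub,
    RatFunc.algebraMap_X, RatFunc.algebraMap_C]
end
end

section
/- In the regular ℤ/N-colored setup with generic parameters, fix an N-tuple λ̄ of Young diagrams, ω ∈ ℤ/N, and 𝔮_ω ∈ ℂ. With A_ω = ã_ω/ε₁, κ̃ = ε̃₂/ε₁, k_ω = k_ω(λ̄), d_ω = k_{ω−1} − k_ω − A_ω, c_ω = (ε₁/2)k_ω + Σ_{boxes of color ω}(ã_{ω′}+c̃(i,j)), M_ω = (m̃_ω^+ + m̃_ω^−)/(2ε₁) and δμ_ω = (m̃_ω^+ − m̃_ω^−)/(2ε₁), the coefficient of x^{−1} in the large-x Laurent expansion of the fractional qq-character 𝒳_ω(x)|_{λ̄} = Y_{ω+1}(x+ε̃)|_{λ̄} + 𝔮_ω·P_ω(x)/Y_ω(x)|_{λ̄} equals ε₁² times [ (c_ω − c_{ω+1} − 𝔮_ω(c_{ω−1} − c_ω))/ε₁ + κ̃·(k_ω − 𝔮_ω·k_{ω−1}) + 𝔮_ω·( (d_ω + M_ω)² − δμ_ω² − d_ω² ) +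 ½·( d_{ω+1}² + 𝔮_ω·d_ω² + 𝔮_ω·A_ω² − A_{ω+1}² ) ]. -/
open scoped BigOperators

noncomputable section

/-- The observable `c_ω = (ε₁/2)·k_ω + Σ_{boxes of color ω} (ã_{ω′} + c̃(i,j))`. -/
def cobs (N : ℕ) [NeZero N] (ε₁ ε₂t : ℂ) (aT : ZMod N → ℂ)
    (lam : ZMod N → YoungDiagram) (ω : ZMod N) : ℂ :=
  ε₁ / 2 * (kcharge N lam ω : ℂ) +
    ∑ ω' : ZMod N,
      ∑ c ∈ (lam ω').cells.filter fun c => ω' + (c.2 : ZMod N) = ω,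
        (aT ω' + ctil ε₁ ε₂t c)

/-- The observable `d_ω = k_{ω−1} − k_ω − A_ω` with `A_ω = ã_ω/ε₁`. -/
def dobs (N : ℕ) [NeZero N] (ε₁ : ℂ) (aT : ZMod N → ℂ)
    (lam : ZMod N → YoungDiagram) (ω : ZMod N) : ℂ :=
  (kcharge N lam (ω - 1) : ℂ) - (kcharge N lam ω : ℂ) - aT ω / ε₁

/-!
Write rational functions near `x = ∞` as `x ^ n * exp (u / x + v / x ^ 2 + o(x ^ (-2)))`.
The triple `(n, u, v)` turns products into sums. The factor `x - p` contributes
`(1, -p, -p ^ 2 / 2)`, so a quotient `(x + s - b - ε₁) / (x + s - b)` contributes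
`(0, -ε₁, -ε₁ * (b + ε₁ / 2 - s))`: summed over the boxes of color `ω`, these are
`-ε₁ * k_ω` and `-ε₁ * (c_ω - s * k_ω)`. Both terms of the qq-character have `n = 1`, and such a
function has `x⁻¹`-coefficient `v + u ^ 2 / 2`.
-/

section Evaluation

open Filter RatFunc

variable {K : Type*} [Field K]

theorem eventually_eval₂_denom_ne_zero (f : RatFunc K) :
    ∀ᶠ x in cofinite, Polynomial.eval₂ (RingHom.id K) x f.denom ≠ 0 :=
  (Polynomial.finite_setOfPred_isRoot f.denom_ne_zero).eventually_cofinite_notMem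

theorem eventually_eval_add (f g : RatFunc K) : ∀ᶠ x in cofinite,
    eval (RingHom.id K) x (f + g) = eval (RingHom.id K) x f + eval (RingHom.id K) x g := by
  filter_upwards [eventually_eval₂_denom_ne_zero f, eventually_eval₂_denom_ne_zero g]
    with x hf hg using eval_add _ _ hf hg

theorem eventually_eval_mul (f g : RatFunc K) : ∀ᶠ x in cofinite,
    eval (RingHom.id K) x (f * g) = eval (RingHom.id K) x f * eval (RingHom.id K) x g := by
  filter_upwards [eventually_eval₂_denom_ne_zero f, eventually_eval₂_denom_ne_zero g]
    with x hf hg using eval_mul _ _ hf hg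

theorem eventually_eval_inv (f : RatFunc K) : ∀ᶠ x in cofinite,
    eval (RingHom.id K) x f⁻¹ = (eval (RingHom.id K) x f)⁻¹ := by
  rcases eq_or_ne f 0 with rfl | hf
  · simp
  filter_upwards [eventually_eval_mul f f⁻¹] with x hx
  rw [mul_inv_cancel₀ hf, eval_one] at hx
  exact eq_inv_of_mul_eq_one_right hx.symm

theorem eval_X_sub_C (x p : K) : eval (RingHom.id K) x (X - C p) = x - p := by
  have h : (X - C p : RatFunc K) = algebraMap (Polynomial K) _ (.X - .C p) := by simp
  rw [h, eval_algebraMap]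
  simp

theorem X_add_C_sub_C (s b : K) : (X + C s - C b : RatFunc K) = X - C (b - s) := by
  rw [map_sub]
  ring

end Evaluation

section Infinity

open Filter RatFunc Topology

theorem tendsto_inv_cocompact : Tendsto (fun x : ℂ => x⁻¹) (cocompact ℂ) (𝓝 0) :=
  Metric.cobounded_eq_cocompact (α := ℂ) ▸ tendsto_inv₀_cobounded

theorem eventually_ne_zero_cocompact : ∀ᶠ x : ℂ in cocompact ℂ, x ≠ 0 :=
  (eventually_cofinite_ne 0).filter_mono cocompact_le_cofinite

theorem log_one_add_sub_isLittleO :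
    (fun z : ℂ => Complex.log (1 + z) - (z - z ^ 2 / 2)) =o[𝓝 0] fun z => z ^ 2 := by
  refine ((Complex.log_sub_logTaylor_isBigO 2).trans_isLittleO
    (Asymptotics.isLittleO_pow_pow (Nat.lt_succ_self 2))).congr_left fun z => ?_
  simp only [Complex.logTaylor, Finset.sum_range_succ, Finset.sum_range_zero]
  norm_num
  ring

theorem exp_sub_isLittleO :
    (fun z : ℂ => Complex.exp z - (1 + z + z ^ 2 / 2)) =o[𝓝 0] fun z => z ^ 2 := by
  simpa [Finset.sum_range_succ] using Complex.exp_sub_sum_range_succ_isLittleO_pow 2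

/-- `HasLogExpansion f n u v` says that `log f(x) = n log x + u / x + v / x² + o(x⁻²)` as `x → ∞`.
It is stated after exponentiating, so that no branch of the logarithm has to be chosen. -/
def HasLogExpansion (f : RatFunc ℂ) (n : ℤ) (u v : ℂ) : Prop :=
  ∃ r : ℂ → ℂ, Tendsto r (cocompact ℂ) (𝓝 v) ∧ ∀ᶠ x in cocompact ℂ,
    eval (RingHom.id ℂ) x f = x ^ n * Complex.exp (u * x⁻¹ + r x * x⁻¹ ^ 2)

/-- `HasXInvCoeff f c` says that `c` is the coefficient of `x⁻¹` in an expansion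
`f(x) = a x + b + c x⁻¹ + o(x⁻¹)` as `x → ∞`. -/
def HasXInvCoeff (f : RatFunc ℂ) (c : ℂ) : Prop :=
  ∃ a b : ℂ, Tendsto (fun x => x * (eval (RingHom.id ℂ) x f - a * x - b)) (cocompact ℂ) (𝓝 c)

namespace HasLogExpansion

variable {f g : RatFunc ℂ} {m n : ℤ} {u v u' v' : ℂ}

theorem one : HasLogExpansion 1 0 0 0 := ⟨0, tendsto_const_nhds, by simp⟩

theorem mul (hf : HasLogExpansion f m u v) (hg : HasLogExpansion g n u' v') :
    HasLogExpansion (f * g) (m + n) (u + u') (v + v') := by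
  obtain ⟨r, hr, hf⟩ := hf
  obtain ⟨t, ht, hg⟩ := hg
  refine ⟨fun x => r x + t x, hr.add ht, ?_⟩
  filter_upwards [hf, hg, eventually_ne_zero_cocompact,
    (eventually_eval_mul f g).filter_mono cocompact_le_cofinite] with x hf hg hx hmul
  rw [hmul, hf, hg, mul_mul_mul_comm, ← zpow_add₀ hx, ← Complex.exp_add]
  ring_nf

theorem inv (hf : HasLogExpansion f n u v) : HasLogExpansion f⁻¹ (-n) (-u) (-v) := by
  obtain ⟨r, hr, hf⟩ := hf
  refine ⟨fun x => -r x, hr.neg, ?_⟩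
  filter_upwards [hf, (eventually_eval_inv f).filter_mono cocompact_le_cofinite] with x hf hinv
  rw [hinv, hf, mul_inv, ← zpow_neg, ← Complex.exp_neg]
  ring_nf

theorem div (hf : HasLogExpansion f m u v) (hg : HasLogExpansion g n u' v') :
    HasLogExpansion (f / g) (m - n) (u - u') (v - v') := by
  simpa only [div_eq_mul_inv, sub_eq_add_neg] using hf.mul hg.inv

theorem prod {ι : Type*} {s : Finset ι} {f : ι → RatFunc ℂ} {n : ι → ℤ} {u v : ι → ℂ}
    (h : ∀ i ∈ s, HasLogExpansion (f i) (n i) (u i) (v i)) :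
    HasLogExpansion (∏ i ∈ s, f i) (∑ i ∈ s, n i) (∑ i ∈ s, u i) (∑ i ∈ s, v i) := by
  induction s using Finset.cons_induction with
  | empty => simpa using one
  | cons i s hi ih =>
    simp only [Finset.prod_cons, Finset.sum_cons]
    exact (h i (s.mem_cons_self i)).mul (ih fun j hj => h j (Finset.mem_cons_of_mem hj))

theorem X_sub_C (p : ℂ) : HasLogExpansion (X - C p) 1 (-p) (-(p ^ 2 / 2)) := by
  have hz : Tendsto (fun x : ℂ => -p * x⁻¹) (cocompact ℂ) (𝓝 0) := by
    simpa using tendsto_inv_cocompact.const_mul (-p)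
  have hlog : (fun x : ℂ => Complex.log (1 + -p * x⁻¹) - (-p * x⁻¹ - (-p * x⁻¹) ^ 2 / 2))
      =o[cocompact ℂ] fun x => x⁻¹ ^ 2 := by
    refine (log_one_add_sub_isLittleO.comp_tendsto hz).trans_isBigO ?_
    simpa only [Function.comp_def, mul_pow] using
      (Asymptotics.isBigO_refl _ _).const_mul_left ((-p) ^ 2)
  refine ⟨fun x => (Complex.log (1 + -p * x⁻¹) - -p * x⁻¹) / x⁻¹ ^ 2, ?_, ?_⟩
  · have hlim := hlog.tendsto_div_nhds_zero.add_const (-(p ^ 2 / 2))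
    rw [zero_add] at hlim
    refine hlim.congr' ?_
    filter_upwards [eventually_ne_zero_cocompact] with x hx
    field_simp
    ring
  · filter_upwards [eventually_ne_zero_cocompact,
      (eventually_cofinite_ne p).filter_mono cocompact_le_cofinite] with x hx hxp
    have hfactor : 1 + -p * x⁻¹ = (x - p) / x := by
      field_simp
      ring
    rw [eval_X_sub_C, div_mul_cancel₀ _ (pow_ne_zero 2 (inv_ne_zero hx)), add_sub_cancel,
      hfactor, Complex.exp_log (div_ne_zero (sub_ne_zero.2 hxp) hx), zpow_one,
      mul_div_cancel₀ _ hx]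

theorem X_add_C_sub_C_div (s b δ : ℂ) :
    HasLogExpansion ((X + C s - C (b + δ)) / (X + C s - C b)) 0 (-δ)
      (-(δ * (b + δ / 2 - s))) := by
  rw [X_add_C_sub_C, X_add_C_sub_C]
  convert! (X_sub_C (b + δ - s)).div (X_sub_C (b - s)) using 1 <;> ring

theorem hasXInvCoeff (hf : HasLogExpansion f 1 u v) : HasXInvCoeff f (v + u ^ 2 / 2) := by
  obtain ⟨r, hr, hf⟩ := hf
  have hxw : Tendsto (fun x => u + r x * x⁻¹) (cocompact ℂ) (𝓝 u) := by
    simpa using (hr.mul tendsto_inv_cocompact).const_add u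
  let w : ℂ → ℂ := fun x => (u + r x * x⁻¹) * x⁻¹
  have hw_zero : Tendsto w (cocompact ℂ) (𝓝 0) := by
    simpa [w] using hxw.mul tendsto_inv_cocompact
  have hw_bigO : w =O[cocompact ℂ] fun x => x⁻¹ := by
    simpa [w] using
      (hxw.isBigO_one ℂ).mul (Asymptotics.isBigO_refl (fun x : ℂ => x⁻¹) _)
  have hexp : Tendsto (fun x => (Complex.exp (w x) - (1 + w x + w x ^ 2 / 2)) / x⁻¹ ^ 2)
      (cocompact ℂ) (𝓝 0) :=
    ((exp_sub_isLittleO.comp_tendsto hw_zero).trans_isBigO (hw_bigO.pow 2)).tendsto_div_nhds_zero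
  have hlim := (hexp.add hr).add ((hxw.pow 2).div_const 2)
  rw [zero_add] at hlim
  refine ⟨1, u, hlim.congr' ?_⟩
  filter_upwards [hf, eventually_ne_zero_cocompact] with x hf hx
  have hw : u * x⁻¹ + r x * x⁻¹ ^ 2 = w x := by ring
  rw [hf, zpow_one, hw]
  simp only [w]
  field_simp
  ring

end HasLogExpansion

namespace HasXInvCoeff

variable {f g : RatFunc ℂ} {c c' : ℂ}

theorem add (hf : HasXInvCoeff f c) (hg : HasXInvCoeff g c') : HasXInvCoeff (f + g) (c + c') := by
  obtain ⟨a, b, hf⟩ := hf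
  obtain ⟨a', b', hg⟩ := hg
  refine ⟨a + a', b + b', (hf.add hg).congr' ?_⟩
  filter_upwards [(eventually_eval_add f g).filter_mono cocompact_le_cofinite] with x hadd
  rw [hadd]
  ring

theorem C_mul (q : ℂ) (hf : HasXInvCoeff f c) : HasXInvCoeff (C q * f) (q * c) := by
  obtain ⟨a, b, hf⟩ := hf
  refine ⟨q * a, q * b, (hf.const_mul q).congr' ?_⟩
  filter_upwards [(eventually_eval_mul (C q) f).filter_mono cocompact_le_cofinite] with x hmul
  rw [hmul, eval_C, RingHom.id_apply]
  ring

end HasXInvCoeff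

end Infinity

section Observables

open RatFunc

variable (N : ℕ) [NeZero N] (ε₁ ε₂t : ℂ) (aT : ZMod N → ℂ) (ω : ZMod N) (s : ℂ)
  (lam : ZMod N → YoungDiagram)

/-- The product of `(x + s − b − ε₁) / (x + s − b)` over the boxes of color `ω`, where
`b = ã_{ω′} + c̃(i, j)` is the shifted content of the box. The boxes of color `ω` contribute this
product at `s` to `Y_ω(x + s)`, and the inverse of the product at `s − ε̃₂` to `Y_{ω+1}(x + s)`. -/
def colorProd : RatFunc ℂ :=
  ∏ ω' : ZMod N, ∏ c ∈ (lam ω').cells.filter fun c => ω' + (c.2 : ZMod N) = ω,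
    (X + C s - C (aT ω' + ctil ε₁ ε₂t c + ε₁)) / (X + C s - C (aT ω' + ctil ε₁ ε₂t c))

theorem Ycol_eq_colorProd_div :
    Ycol N ε₁ ε₂t aT ω s lam = (X + C s - C (aT ω)) *
      (colorProd N ε₁ ε₂t aT ω s lam / colorProd N ε₁ ε₂t aT (ω - 1) (s - ε₂t) lam) := by
  have hshift (b : ℂ) : (X + C (s - ε₂t) - C b : RatFunc ℂ) = X + C s - C (b + ε₂t) := by
    simp only [map_sub, map_add]
    ring
  rw [Ycol, colorProd, colorProd, ← Finset.prod_div_distrib]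
  congr! 2 with ω'
  rw [Finset.prod_filter, Finset.prod_filter, ← Finset.prod_div_distrib]
  refine Finset.prod_congr rfl fun c _ => ?_
  simp only [hshift, add_right_comm _ ε₁ ε₂t]
  split_ifs <;> simp [div_eq_mul_inv]

theorem hasLogExpansion_colorProd :
    HasLogExpansion (colorProd N ε₁ ε₂t aT ω s lam) 0 (-(ε₁ * kcharge N lam ω))
      (-(ε₁ * (cobs N ε₁ ε₂t aT lam ω - s * kcharge N lam ω))) := by
  convert! HasLogExpansion.prod fun ω' _ => HasLogExpansion.prod fun c _ =>
    HasLogExpansion.X_add_C_sub_C_div s (aT ω' + ctil ε₁ ε₂t c) ε₁ using 1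
  · simp
  · simp [kcharge, Finset.mul_sum, mul_comm]
  · simp only [cobs, kcharge, Finset.sum_neg_distrib, ← Finset.mul_sum, Finset.sum_sub_distrib,
      Finset.sum_add_distrib, Finset.sum_const, nsmul_eq_mul, ← Finset.sum_mul, Nat.cast_sum]
    ring

theorem hasLogExpansion_Ycol :
    HasLogExpansion (Ycol N ε₁ ε₂t aT ω s lam) 1
      (s - aT ω + ε₁ * (kcharge N lam (ω - 1) - kcharge N lam ω))
      (-((aT ω - s) ^ 2 / 2) + ε₁ * (cobs N ε₁ ε₂t aT lam (ω - 1) - cobs N ε₁ ε₂t aT lam ω +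
        (ε₂t - s) * kcharge N lam (ω - 1) + s * kcharge N lam ω)) := by
  rw [Ycol_eq_colorProd_div, X_add_C_sub_C]
  convert! (HasLogExpansion.X_sub_C (aT ω - s)).mul
    ((hasLogExpansion_colorProd N ε₁ ε₂t aT ω s lam).div
      (hasLogExpansion_colorProd N ε₁ ε₂t aT (ω - 1) (s - ε₂t) lam)) using 1 <;> ring

end Observables

theorem fractional_qq_character_x_inv_coefficient_general (N : ℕ) [NeZero N]
    {ε₁ : ℂ} (hε₁ : ε₁ ≠ 0) (ε₂t : ℂ) (aT mp mm : ZMod N → ℂ)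
    (lam : ZMod N → YoungDiagram) (ω : ZMod N) (q : ℂ) :
    HasXInvCoeff
      (Ycol N ε₁ ε₂t aT (ω + 1) (ε₁ + ε₂t) lam +
        RatFunc.C q * ((RatFunc.X - RatFunc.C (mp ω)) * (RatFunc.X - RatFunc.C (mm ω)) /
          Ycol N ε₁ ε₂t aT ω 0 lam))
      (ε₁ ^ 2 *
        ((cobs N ε₁ ε₂t aT lam ω - cobs N ε₁ ε₂t aT lam (ω + 1) -
            q * (cobs N ε₁ ε₂t aT lam (ω - 1) - cobs N ε₁ ε₂t aT lam ω)) / ε₁ +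
          (ε₂t / ε₁) * ((kcharge N lam ω : ℂ) - q * (kcharge N lam (ω - 1) : ℂ)) +
          q * ((dobs N ε₁ aT lam ω + (mp ω + mm ω) / (2 * ε₁)) ^ 2 -
            ((mp ω - mm ω) / (2 * ε₁)) ^ 2 - dobs N ε₁ aT lam ω ^ 2) +
          (1 / 2) * (dobs N ε₁ aT lam (ω + 1) ^ 2 + q * dobs N ε₁ aT lam ω ^ 2 +
            q * (aT ω / ε₁) ^ 2 - (aT (ω + 1) / ε₁) ^ 2))) := by
  have hY := hasLogExpansion_Ycol N ε₁ ε₂t aT (ω + 1) (ε₁ + ε₂t) lam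
  have hPY := ((HasLogExpansion.X_sub_C (mp ω)).mul (.X_sub_C (mm ω))).div
    (hasLogExpansion_Ycol N ε₁ ε₂t aT ω 0 lam)
  convert! hY.hasXInvCoeff.add (hPY.hasXInvCoeff.C_mul q) using 1
  simp only [dobs, add_sub_cancel_right]
  field_simp
  ring

/-- The coefficient of `x^{−1}` in the large-`x` Laurent expansion of the fractional
qq-character `𝒳_ω(x)|_λ̄ = Y_{ω+1}(x+ε̃)|_λ̄ + 𝔮_ω·P_ω(x)/Y_ω(x)|_λ̄` equals
`ε₁²·[(c_ω − c_{ω+1} − 𝔮_ω(c_{ω−1} − c_ω))/ε₁ + κ̃(k_ω − 𝔮_ω k_{ω−1})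
  + 𝔮_ω((d_ω + M_ω)² − δμ_ω² − d_ω²) + ½(d_{ω+1}² + 𝔮_ω d_ω² + 𝔮_ω A_ω² − A_{ω+1}²)]`,
with `M_ω = (m̃⁺_ω + m̃⁻_ω)/(2ε₁)`, `δμ_ω = (m̃⁺_ω − m̃⁻_ω)/(2ε₁)`. Here the coefficient
of `x^{−1}` of a rational function with expansion `a·x + b + c·x^{−1} + O(x^{−2})` is
characterized by `c = lim_{x→∞} x·(f(x) − a·x − b)`. -/
theorem fractional_qq_character_x_inv_coefficient (N : ℕ) [NeZero N]
    (ε₁ ε₂t : ℂ) (aT mp mm : ZMod N → ℂ)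
    (hgen : ∀ ω' ω'' : ZMod N, ∀ i j : ℤ,
      aT ω' - aT ω'' + (i : ℂ) * ε₁ + (j : ℂ) * ε₂t = 0 → ω' = ω'' ∧ i = 0 ∧ j = 0)
    (lam : ZMod N → YoungDiagram) (ω : ZMod N) (q : ℂ) :
    ∃ aa bb : ℂ,
      Filter.Tendsto
        (fun x : ℂ => x *
          (RatFunc.eval (RingHom.id ℂ) x
              (Ycol N ε₁ ε₂t aT (ω + 1) (ε₁ + ε₂t) lam +
                RatFunc.C q *
                  ((RatFunc.X - RatFunc.C (mp ω)) * (RatFunc.X - RatFunc.C (mm ω)) /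
                    Ycol N ε₁ ε₂t aT ω 0 lam)) -
            aa * x - bb))
        (Filter.cocompact ℂ)
        (nhds (ε₁ ^ 2 *
          ((cobs N ε₁ ε₂t aT lam ω - cobs N ε₁ ε₂t aT lam (ω + 1) -
              q * (cobs N ε₁ ε₂t aT lam (ω - 1) - cobs N ε₁ ε₂t aT lam ω)) / ε₁ +
            (ε₂t / ε₁) * ((kcharge N lam ω : ℂ) - q * (kcharge N lam (ω - 1) : ℂ)) +
            q * ((dobs N ε₁ aT lam ω + (mp ω + mm ω) / (2 * ε₁)) ^ 2 -
              ((mp ω - mm ω) / (2 * ε₁)) ^ 2 - dobs N ε₁ aT lam ω ^ 2) +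
            (1 / 2) * (dobs N ε₁ aT lam (ω + 1) ^ 2 + q * dobs N ε₁ aT lam ω ^ 2 +
              q * (aT ω / ε₁) ^ 2 - (aT (ω + 1) / ε₁) ^ 2)))) := by
  have hε₁ : ε₁ ≠ 0 := fun h => by simpa using (hgen 0 0 1 0 (by simp [h])).2.1
  exact fractional_qq_character_x_inv_coefficient_general N hε₁ ε₂t aT mp mm lam ω q
end
end
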